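/- Let σ and τ be (possibly empty) non-crossing RGFs, and let ρ and ρ′ be non-crossing RGFs with ρ ≃cc ρ′. Then σ[ρ][τ] ≃cc σ[ρ′][τ]. -/

import Mathlib

/-- A restricted growth function (canonical sequential form of a set partition):
a word over the positive integers whose first letter is 1 and where each letter
is at most one more than the maximum of the preceding letters. -/
def IsRGF (w : List ℕ) : Prop :=
  (∀ x ∈ w, 1 ≤ x) ∧
  (w ≠ [] → w.getD 0 0 = 1) ∧
  ∀ i, i + 1 < w.length → w.getD (i + 1) 0 ≤ ((w.take (i + 1)).foldr max 0) + 1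

/-- Two words of the same length are order-isomorphic: corresponding entries
compare the same way (this preserves equalities as well). -/
def WordOrdIso (s t : List ℕ) : Prop :=
  s.length = t.length ∧
  ∀ i j, i < s.length → j < s.length →
    (s.getD i 0 < s.getD j 0 ↔ t.getD i 0 < t.getD j 0)

/-- `w` contains the pattern `p`: a subsequence of `w` is order-isomorphic to `p`. -/
def PatContains (w p : List ℕ) : Prop := ∃ s : List ℕ, s.Sublist w ∧ WordOrdIso s p

/-- `w` avoids the pattern `p`. -/
def PatAvoids (w p : List ℕ) : Prop := ¬ PatContains w p

/-- `pCount n T` = number of RGFs of length `n` avoiding every pattern in `T`. -/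
noncomputable def pCount (n : ℕ) (T : Set (List ℕ)) : ℕ :=
  {w : List ℕ | IsRGF w ∧ w.length = n ∧ ∀ p ∈ T, PatAvoids w p}.ncard

/-- A word is non-crossing if it avoids the pattern 1212. -/
def NonCrossing (w : List ℕ) : Prop := PatAvoids w [1,2,1,2]

/-- The number of distinct letters of an RGF equals its maximum letter. -/
def nLetters (w : List ℕ) : ℕ := w.foldr max 0

/-- `rgfComp a b` is the pattern `a[b]`: `a` followed by `b` shifted up by the
number of distinct letters of `a`. -/
def rgfComp (a b : List ℕ) : List ℕ := a ++ b.map (· + nLetters a)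

/-- A connected RGF: nonempty and not expressible as `σ[τ]` with `σ, τ` nonempty RGFs. -/
def Connected (w : List ℕ) : Prop :=
  w ≠ [] ∧ ¬ ∃ a b : List ℕ, IsRGF a ∧ IsRGF b ∧ a ≠ [] ∧ b ≠ [] ∧ w = rgfComp a b

/-- `w` decomposes as `σ₁[σ₂]⋯[σ_p]` with each `σ_i` a connected RGF. -/
def HasComponents (w : List ℕ) (p : ℕ) : Prop :=
  ∃ l : List (List ℕ), l.length = p ∧ (∀ c ∈ l, IsRGF c ∧ Connected c) ∧
    w = l.foldr rgfComp []

/-- Number of non-crossing RGFs of length `n` with `p` components avoiding `σ`. -/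
noncomputable def ncCount (n p : ℕ) (σ : List ℕ) : ℕ :=
  {w : List ℕ | IsRGF w ∧ NonCrossing w ∧ w.length = n ∧ PatAvoids w σ ∧
    HasComponents w p}.ncard

/-- cc-equivalence of patterns. -/
def ccEquiv (σ τ : List ℕ) : Prop := ∀ n p : ℕ, ncCount n p σ = ncCount n p τ

/-- Number of non-crossing RGFs of length `n` avoiding `σ`. -/
noncomputable def ncAvoidCount (n : ℕ) (σ : List ℕ) : ℕ :=
  {w : List ℕ | IsRGF w ∧ NonCrossing w ∧ w.length = n ∧ PatAvoids w σ}.ncard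

/-- Auxiliary: builds `1[σ₁]1[σ₂]⋯1[σ_k]1` with accumulated letter shift `s`. -/
def onePatAux : ℕ → List (List ℕ) → List ℕ
  | _, [] => [1]
  | s, c :: rest => 1 :: (c.map (· + s) ++ onePatAux (s + nLetters c) rest)

/-- The pattern `1[σ₁]1[σ₂]⋯1[σ_k]1`. -/
def onePat (l : List (List ℕ)) : List ℕ := onePatAux 1 l

/-- The pattern `1[σ]1[τ]`. -/
def pat2 (σ τ : List ℕ) : List ℕ :=
  1 :: (σ.map (· + 1) ++ 1 :: τ.map (· + (1 + nLetters σ)))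

/-!
Non-crossing RGFs are encoded by binary trees, and `ρ ≃cc ρ'` means that the trees containing `ρ`
and those containing `ρ'` embed into each other with their numbers of nodes and of components
preserved.

An occurrence of `σ[ρ]` in a non-crossing RGF `w` amounts to a value `m` such that the letters of
`w` before the first `m + 1` contain `σ` and the letters of `w` larger than `m` contain `ρ`: since
`w` is non-crossing, a letter smaller than `m + 1` that precedes some `m + 1` precedes the first
one. The least such `m` is canonical, and so is the greatest. Cutting `w` at `m` produces two
non-crossing RGFs, and the way in which `w` is assembled from them depends only on their numbers
of components. Either part can therefore be replaced by another non-crossing RGF with the same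
numbers of letters and of components. With `m` least, this transfers an embedding from `ρ`, `ρ'` to
`σ[ρ]`, `σ[ρ']`; with `m` greatest, from `σ`, `σ'` to `σ[τ]`, `σ'[τ]`.
-/

/-! ### Pattern containment -/

lemma wordOrdIso_iff_zip {s t : List ℕ} : WordOrdIso s t ↔ s.length = t.length ∧
    ∀ a ∈ s.zip t, ∀ b ∈ s.zip t, (a.1 < b.1 ↔ a.2 < b.2) := by
  refine and_congr_right fun hl ↦ ?_
  simp only [List.mem_iff_getElem, List.length_zip, ← hl, min_self, List.getElem_zip,
    forall_exists_index]
  constructor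
  · rintro h _ i hi rfl _ j hj rfl
    simpa [hi, hj, ← hl] using h i j hi hj
  · intro h i j hi hj
    simpa [hi, hj, ← hl] using h _ i hi rfl _ j hj rfl

lemma wordOrdIso_comm {s t : List ℕ} : WordOrdIso s t ↔ WordOrdIso t s := by
  simp only [WordOrdIso, eq_comm (a := s.length)]
  exact and_congr_right fun hl ↦ by simp only [hl, iff_comm]

lemma wordOrdIso_map_left {f : ℕ → ℕ} (hf : StrictMono f) {s t : List ℕ} :
    WordOrdIso (s.map f) t ↔ WordOrdIso s t := by
  simp only [wordOrdIso_iff_zip, List.length_map, List.zip_map_left, List.forall_mem_map,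
    Prod.map_fst, Prod.map_snd, hf.lt_iff_lt, id]

lemma wordOrdIso_map_right {f : ℕ → ℕ} (hf : StrictMono f) {s t : List ℕ} :
    WordOrdIso s (t.map f) ↔ WordOrdIso s t := by
  rw [wordOrdIso_comm, wordOrdIso_map_left hf, wordOrdIso_comm]

lemma wordOrdIso_append_append {s₁ s₂ t₁ t₂ : List ℕ} (hl : s₁.length = t₁.length)
    (ht : ∀ x ∈ t₁, ∀ y ∈ t₂, x < y) :
    WordOrdIso (s₁ ++ s₂) (t₁ ++ t₂) ↔
      WordOrdIso s₁ t₁ ∧ WordOrdIso s₂ t₂ ∧ ∀ x ∈ s₁, ∀ y ∈ s₂, x < y := by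
  by_cases hl₂ : s₂.length = t₂.length
  swap
  · simp [WordOrdIso, hl, hl₂]
  have cross : (∀ x ∈ s₁, ∀ y ∈ s₂, x < y) ↔
      ∀ a ∈ s₁.zip t₁, ∀ b ∈ s₂.zip t₂, a.1 < b.1 := by
    conv_lhs => rw [← List.map_fst_zip hl.le, ← List.map_fst_zip hl₂.le]
    simp only [List.forall_mem_map]
  have ht' : ∀ a ∈ s₁.zip t₁, ∀ b ∈ s₂.zip t₂, a.2 < b.2 := fun a ha b hb ↦
    ht _ (List.of_mem_zip ha).2 _ (List.of_mem_zip hb).2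
  simp only [wordOrdIso_iff_zip, List.zip_append hl, List.forall_mem_append, List.length_append,
    hl, hl₂, cross, true_and]
  grind

lemma PatContains.mono {w w' p : List ℕ} (h : PatContains w p) (hw : w.Sublist w') :
    PatContains w' p :=
  h.imp fun _ hs ↦ ⟨hs.1.trans hw, hs.2⟩

lemma patContains_nil (w : List ℕ) : PatContains w [] :=
  ⟨[], List.nil_sublist w, by simp [WordOrdIso]⟩

lemma PatContains.ne_nil {w p : List ℕ} (h : PatContains w p) (hp : p ≠ []) : w ≠ [] := by
  rintro rfl
  obtain ⟨s, hs, hl, -⟩ := h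
  rw [List.sublist_nil.mp hs] at hl
  exact hp (List.length_eq_zero_iff.mp hl.symm)

lemma patContains_map {f : ℕ → ℕ} (hf : StrictMono f) {w p : List ℕ} :
    PatContains (w.map f) p ↔ PatContains w p := by
  simp only [PatContains, List.sublist_map_iff]
  constructor
  · rintro ⟨_, ⟨s, hs, rfl⟩, h⟩
    exact ⟨s, hs, (wordOrdIso_map_left hf).mp h⟩
  · rintro ⟨s, hs, h⟩
    exact ⟨s.map f, ⟨s, hs, rfl⟩, (wordOrdIso_map_left hf).mpr h⟩

/-! ### Composition of words -/

@[simp] lemma nLetters_nil : nLetters [] = 0 := rfl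

@[simp] lemma nLetters_cons (a : ℕ) (w : List ℕ) : nLetters (a :: w) = max a (nLetters w) := rfl

@[simp] lemma nLetters_append (v w : List ℕ) :
    nLetters (v ++ w) = max (nLetters v) (nLetters w) := by
  induction v with
  | nil => simp
  | cons a v ih => simp [ih, max_assoc]

lemma nLetters_le_iff {w : List ℕ} {k : ℕ} : nLetters w ≤ k ↔ ∀ x ∈ w, x ≤ k := by
  induction w with
  | nil => simp
  | cons a w ih => simp [ih]

lemma le_nLetters {w : List ℕ} {x : ℕ} (h : x ∈ w) : x ≤ nLetters w :=
  nLetters_le_iff.mp le_rfl x h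

lemma nLetters_map_add {w : List ℕ} (hw : w ≠ []) (k : ℕ) :
    nLetters (w.map (· + k)) = nLetters w + k := by
  induction w with
  | nil => contradiction
  | cons a w ih =>
    rcases eq_or_ne w [] with rfl | h
    · simp
    · simp [ih h, max_add_add_right]

@[simp] lemma rgfComp_nil (w : List ℕ) : rgfComp w [] = w := by simp [rgfComp]

@[simp] lemma nil_rgfComp (w : List ℕ) : rgfComp [] w = w := by simp [rgfComp]

@[simp] lemma nLetters_rgfComp (v w : List ℕ) :
    nLetters (rgfComp v w) = nLetters v + nLetters w := by
  rcases eq_or_ne w [] with rfl | h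
  · simp
  · rw [rgfComp, nLetters_append, nLetters_map_add h]
    omega

lemma rgfComp_assoc (u v w : List ℕ) :
    rgfComp (rgfComp u v) w = rgfComp u (rgfComp v w) := by
  rw [rgfComp, nLetters_rgfComp]
  simp [rgfComp, add_comm]

lemma lt_of_mem_map_add {w : List ℕ} (hw : ∀ x ∈ w, 1 ≤ x) {k y : ℕ}
    (hy : y ∈ w.map (· + k)) : k < y := by
  obtain ⟨x, hx, rfl⟩ := List.mem_map.mp hy
  have := hw x hx
  omega

lemma patContains_rgfComp_iff {w σ ρ : List ℕ} (hρ : ∀ x ∈ ρ, 1 ≤ x) :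
    PatContains w (rgfComp σ ρ) ↔ ∃ s₁ s₂, (s₁ ++ s₂).Sublist w ∧
      WordOrdIso s₁ σ ∧ WordOrdIso s₂ ρ ∧ ∀ x ∈ s₁, ∀ y ∈ s₂, x < y := by
  have hlt : ∀ x ∈ σ, ∀ y ∈ ρ.map (· + nLetters σ), x < y := fun x hx y hy ↦
    (le_nLetters hx).trans_lt (lt_of_mem_map_add hρ hy)
  constructor
  · rintro ⟨s, hs, h⟩
    have hl : (s.take σ.length).length = σ.length := by
      simp [h.1, rgfComp]
    rw [← List.take_append_drop σ.length s, rgfComp, wordOrdIso_append_append hl hlt,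
      wordOrdIso_map_right add_left_strictMono] at h
    exact ⟨_, _, by rwa [List.take_append_drop], h⟩
  · rintro ⟨s₁, s₂, hs, h₁, h₂, h⟩
    refine ⟨_, hs, (wordOrdIso_append_append h₁.1 hlt).mpr ⟨h₁, ?_, h⟩⟩
    exact (wordOrdIso_map_right add_left_strictMono).mpr h₂

/-! ### Restricted growth functions and non-crossing words -/

lemma isRGF_nil : IsRGF [] := by simp [IsRGF]

lemma isRGF_concat_iff {w : List ℕ} {x : ℕ} :
    IsRGF (w ++ [x]) ↔ IsRGF w ∧ 1 ≤ x ∧ x ≤ nLetters w + 1 := by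
  rcases w.eq_nil_or_concat with rfl | ⟨u, y, rfl⟩
  · have : IsRGF [x] ↔ 1 ≤ x ∧ x = 1 := by simp [IsRGF]
    simp only [List.nil_append, this, isRGF_nil, nLetters_nil, true_and]
    omega
  rw [List.concat_eq_append]
  generalize hw : u ++ [y] = w
  have hlen : u.length + 1 = w.length := by simp [← hw]
  have hpos : w ≠ [] := by simp [← hw]
  have getD_concat : ∀ i < w.length, (w ++ [x]).getD i 0 = w.getD i 0 := fun i hi ↦
    List.getD_append _ _ _ _ hi
  have take_concat : ∀ i ≤ w.length, (w ++ [x]).take i = w.take i := fun i hi ↦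
    List.take_append_of_le_length hi
  have getD_last : (w ++ [x]).getD w.length 0 = x := by simp
  constructor
  · rintro ⟨h₁, h₂, h₃⟩
    refine ⟨⟨fun z hz ↦ h₁ z (by simp [hz]), fun _ ↦ ?_, fun i hi ↦ ?_⟩, h₁ x (by simp), ?_⟩
    · rw [← getD_concat 0 (by omega)]
      exact h₂ (by simp)
    · rw [← getD_concat _ hi, ← take_concat _ hi.le]
      exact h₃ i (by rw [List.length_append]; omega)
    · have := h₃ u.length (by rw [List.length_append, hlen]; simp)
      rwa [hlen, getD_last, take_concat _ le_rfl, List.take_length] at this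
  · rintro ⟨⟨h₁, h₂, h₃⟩, hx₁, hx⟩
    refine ⟨by simpa [or_imp, forall_and] using ⟨h₁, hx₁⟩, fun _ ↦ ?_, fun i hi ↦ ?_⟩
    · rw [getD_concat 0 (by omega)]
      exact h₂ hpos
    · rcases eq_or_ne i u.length with rfl | hi'
      · rwa [hlen, getD_last, take_concat _ le_rfl, List.take_length]
      · have hi'' : i + 1 < w.length := by
          rw [List.length_append, List.length_singleton] at hi
          omega
        rw [getD_concat _ hi'', take_concat _ hi''.le]
        exact h₃ i hi''

lemma IsRGF.exists_eq_one_cons {w : List ℕ} (h : IsRGF w) (hne : w ≠ []) : ∃ v, w = 1 :: v := by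
  obtain ⟨c, v, rfl⟩ := List.exists_cons_of_ne_nil hne
  obtain rfl : c = 1 := h.2.1 hne
  exact ⟨v, rfl⟩

lemma IsRGF.of_append {v w : List ℕ} (h : IsRGF (v ++ w)) : IsRGF v := by
  induction w using List.reverseRecOn with
  | nil => simpa using h
  | append_singleton w x ih =>
    rw [← List.append_assoc, isRGF_concat_iff] at h
    exact ih h.1

lemma IsRGF.nLetters_pos {w : List ℕ} (h : IsRGF w) (hne : w ≠ []) : 0 < nLetters w := by
  obtain ⟨v, rfl⟩ := h.exists_eq_one_cons hne
  exact Nat.one_pos.trans_le (le_nLetters List.mem_cons_self)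

lemma IsRGF.mem_of_le_nLetters {w : List ℕ} (h : IsRGF w) {x : ℕ} (hx : 1 ≤ x)
    (hxw : x ≤ nLetters w) : x ∈ w := by
  induction w using List.reverseRecOn with
  | nil =>
    rw [nLetters_nil] at hxw
    omega
  | append_singleton w y ih =>
    obtain ⟨hw, -, hy⟩ := isRGF_concat_iff.mp h
    by_cases hxw' : x ≤ nLetters w
    · exact List.mem_append_left _ (ih hw hxw')
    · simp only [nLetters_append, nLetters_cons, nLetters_nil] at hxw
      have : x = y := by omega
      simp [this]

lemma IsRGF.mem_of_lt {l r : List ℕ} {x : ℕ} (h : IsRGF (l ++ x :: r)) {a : ℕ} (ha : 1 ≤ a)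
    (hax : a < x) : a ∈ l := by
  rw [List.append_cons] at h
  obtain ⟨hl, -, hx⟩ := isRGF_concat_iff.mp h.of_append
  exact hl.mem_of_le_nLetters ha (by omega)

lemma isRGF_rgfComp_iff {v w : List ℕ} (hw : ∀ x ∈ w, 1 ≤ x) :
    IsRGF (rgfComp v w) ↔ IsRGF v ∧ IsRGF w := by
  induction w using List.reverseRecOn with
  | nil => simp [isRGF_nil]
  | append_singleton w x ih =>
    simp only [List.forall_mem_append, List.forall_mem_singleton] at hw
    have : rgfComp v (w ++ [x]) = rgfComp v w ++ [x + nLetters v] := by simp [rgfComp]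
    rw [this, isRGF_concat_iff, isRGF_concat_iff, ih hw.1, nLetters_rgfComp]
    grind

lemma nonCrossing_iff {w : List ℕ} :
    NonCrossing w ↔ ∀ a b, [a, b, a, b].Sublist w → b ≤ a := by
  simp only [NonCrossing, PatAvoids, PatContains, not_exists, not_and]
  constructor
  · intro h a b hs
    by_contra! hab
    refine h _ hs (wordOrdIso_iff_zip.mpr ⟨rfl, ?_⟩)
    simp [hab, hab.le]
  · intro h s hs hiso
    obtain ⟨a, b, c, d, rfl⟩ := List.length_eq_four.mp hiso.1
    have := (wordOrdIso_iff_zip.mp hiso).2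
    simp only [List.zip_cons_cons, List.zip_nil_right, List.forall_mem_cons] at this
    obtain rfl : a = c := by omega
    obtain rfl : b = d := by omega
    have := h a b hs
    omega

lemma NonCrossing.mono {v w : List ℕ} (h : NonCrossing w) (hv : v.Sublist w) : NonCrossing v :=
  fun hc ↦ h (hc.mono hv)

lemma nonCrossing_map {f : ℕ → ℕ} (hf : StrictMono f) {w : List ℕ} :
    NonCrossing (w.map f) ↔ NonCrossing w :=
  not_congr (patContains_map hf)

lemma nonCrossing_rgfComp_iff {v w : List ℕ} (hw : ∀ x ∈ w, 1 ≤ x) :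
    NonCrossing (rgfComp v w) ↔ NonCrossing v ∧ NonCrossing w := by
  have hmap := nonCrossing_map (w := w) (add_left_strictMono (a := nLetters v))
  refine ⟨fun h ↦ ⟨h.mono (List.sublist_append_left _ _),
    hmap.mp (h.mono (List.sublist_append_right _ _))⟩, ?_⟩
  rw [← hmap, rgfComp]
  rintro ⟨hv, hw'⟩
  have hge : ∀ x ∈ w.map (· + nLetters v), nLetters v < x := fun x ↦ lt_of_mem_map_add hw
  generalize w.map (· + nLetters v) = w' at *
  rw [nonCrossing_iff] at hv hw' ⊢
  intro a b hs
  have hle : ∀ x ∈ v, x ≤ nLetters v := fun x ↦ le_nLetters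
  have mono : (v ++ w').Pairwise fun x y ↦ nLetters v < x → nLetters v < y :=
    List.pairwise_append.mpr
      ⟨List.pairwise_of_forall_mem_list fun x hx _ _ h ↦ absurd (hle x hx) h.not_ge,
        List.pairwise_of_forall_mem_list fun _ _ y hy _ ↦ hge y hy, fun _ _ y hy _ ↦ hge y hy⟩
  by_contra! hab
  rcases lt_or_ge (nLetters v) a with ha | ha
  · have hva : v.filter (nLetters v < ·) = [] := by simpa using hle
    have hwa : w'.filter (nLetters v < ·) = w' := by simpa using hge
    have := hs.filter (nLetters v < ·)
    rw [List.filter_append, hva, hwa] at this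
    exact hab.not_ge (hw' a b (by simpa [ha, ha.trans hab] using this))
  · have hb : b ≤ nLetters v := by
      by_contra! hb
      have := List.rel_of_pairwise_cons (mono.sublist hs).of_cons (a' := a) (by simp)
      exact ha.not_gt (this hb)
    have hva : v.filter (· ≤ nLetters v) = v := by simpa using hle
    have hwa : w'.filter (· ≤ nLetters v) = [] := by simpa using hge
    have := hs.filter (· ≤ nLetters v)
    rw [List.filter_append, hva, hwa, List.append_nil] at this
    exact hab.not_ge (hv a b (by simpa [ha, hb] using this))

lemma NonCrossing.concat_one {w : List ℕ} (h : NonCrossing w) (hw : ∀ x ∈ w, 1 ≤ x) :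
    NonCrossing (w ++ [1]) := by
  rw [nonCrossing_iff] at h ⊢
  intro a b hs
  by_contra! hab
  have ha : 1 ≤ a := by
    have := hs.subset (List.mem_cons_self)
    simp only [List.mem_append, List.mem_singleton] at this
    exact this.elim (hw a) Eq.ge
  obtain ⟨s₁, s₂, hs', h₁, h₂⟩ := List.sublist_append_iff.mp hs
  rcases s₂.eq_nil_or_concat with rfl | ⟨s₂, y, rfl⟩
  · have := h a b (by simpa [hs'] using h₁)
    omega
  · have hy : y = b := by
      have := congrArg List.getLast? hs'
      simpa using this.symm
    have : b = 1 := by simpa [hy] using h₂.subset (a := b) (by simp [hy])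
    omega

/-! ### Cutting a word at a letter -/

lemma le_of_mem_takeWhile_le {w : List ℕ} {m x : ℕ} (hx : x ∈ w.takeWhile (· ≤ m)) : x ≤ m :=
  of_decide_eq_true (List.mem_takeWhile_imp (p := (· ≤ m)) hx)

lemma takeWhile_takeWhile_of_le {k m : ℕ} (hk : k ≤ m) (w : List ℕ) :
    (w.takeWhile (· ≤ m)).takeWhile (· ≤ k) = w.takeWhile (· ≤ k) := by
  rw [List.takeWhile_takeWhile]
  congr 1
  funext a
  simpa using fun h : a ≤ k ↦ h.trans hk

lemma takeWhile_append_of_lt_nLetters {u : List ℕ} {m : ℕ} (hm : m < nLetters u) (v : List ℕ) :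
    (u ++ v).takeWhile (· ≤ m) = u.takeWhile (· ≤ m) := by
  rw [List.takeWhile_append, if_neg]
  intro hl
  have hu := (List.takeWhile_prefix (· ≤ m)).eq_of_length hl
  refine hm.not_ge (nLetters_le_iff.mpr fun x hx ↦ le_of_mem_takeWhile_le (w := u) ?_)
  rwa [hu]

lemma takeWhile_rgfComp (u v : List ℕ) (m : ℕ) :
    (rgfComp u v).takeWhile (· ≤ nLetters u + m) = rgfComp u (v.takeWhile (· ≤ m)) := by
  have hu : ∀ x ∈ u, decide (x ≤ nLetters u + m) = true := fun x hx ↦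
    decide_eq_true ((le_nLetters hx).trans (Nat.le_add_right _ _))
  rw [rgfComp, List.takeWhile_append_of_pos hu, List.takeWhile_map, rgfComp]
  congr 3
  ext x
  simp [Nat.add_comm x]

lemma filter_rgfComp (u v : List ℕ) (m : ℕ) :
    (rgfComp u v).filter (nLetters u + m < ·) = (v.filter (m < ·)).map (· + nLetters u) := by
  have hu : u.filter (nLetters u + m < ·) = [] := List.filter_eq_nil_iff.mpr fun x hx ↦ by
    simpa using (le_nLetters hx).trans (Nat.le_add_right _ _)
  rw [rgfComp, List.filter_append, hu, List.nil_append, List.filter_map]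
  congr 2
  ext x
  simp [Nat.add_comm x]

lemma filter_rgfComp_of_le {u v : List ℕ} (hv : ∀ x ∈ v, 1 ≤ x) {m : ℕ} (hm : m ≤ nLetters u) :
    (rgfComp u v).filter (m < ·) = u.filter (m < ·) ++ v.map (· + nLetters u) := by
  have hv' : (v.map (· + nLetters u)).filter (m < ·) = v.map (· + nLetters u) :=
    List.filter_eq_self.mpr fun x hx ↦ decide_eq_true (hm.trans_lt (lt_of_mem_map_add hv hx))
  rw [rgfComp, List.filter_append, hv']

lemma patContains_rgfComp_of_cut {w σ ρ : List ℕ} (hρ : ∀ x ∈ ρ, 1 ≤ x) (m : ℕ)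
    (hσw : PatContains (w.takeWhile (· ≤ m)) σ) (hρw : PatContains (w.filter (m < ·)) ρ) :
    PatContains w (rgfComp σ ρ) := by
  obtain ⟨s₁, hs₁, h₁⟩ := hσw
  obtain ⟨s₂, hs₂, h₂⟩ := hρw
  have hfilter : w.filter (m < ·) = (w.dropWhile (· ≤ m)).filter (m < ·) := by
    conv_lhs => rw [← List.takeWhile_append_dropWhile (p := (· ≤ m)) (l := w)]
    have : (w.takeWhile (· ≤ m)).filter (m < ·) = [] := by
      simpa using fun x ↦ le_of_mem_takeWhile_le (w := w)
    rw [List.filter_append, this, List.nil_append]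
  refine (patContains_rgfComp_iff hρ).mpr ⟨s₁, s₂, ?_, h₁, h₂, fun x hx y hy ↦ ?_⟩
  · rw [← List.takeWhile_append_dropWhile (p := (· ≤ m)) (l := w)]
    exact hs₁.append ((hfilter ▸ hs₂).trans List.filter_sublist)
  · have hy' : m < y := of_decide_eq_true (List.mem_filter.mp (hs₂.subset hy)).2
    exact (le_of_mem_takeWhile_le (hs₁.subset hx)).trans_lt hy'

lemma IsRGF.exists_eq_takeWhile_append {w : List ℕ} (hw : IsRGF w) {m : ℕ} (hm : m < nLetters w) :
    ∃ v, w = w.takeWhile (· ≤ m) ++ (m + 1) :: v := by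
  have hw' := List.takeWhile_append_dropWhile (p := (· ≤ m)) (l := w)
  rcases hd : w.dropWhile (· ≤ m) with _ | ⟨y, v⟩
  · rw [hd, List.append_nil] at hw'
    exact absurd hm (nLetters_le_iff.mpr (hw' ▸ fun x ↦ le_of_mem_takeWhile_le)).not_gt
  have hy : m + 1 ≤ y := by
    have := List.head_dropWhile_not (l := w) (· ≤ m) (by simp [hd])
    simpa [hd] using this
  rw [hd] at hw'
  refine ⟨v, ?_⟩
  obtain rfl | hy := hy.eq_or_lt'
  · exact hw'.symm
  · rw [← hw'] at hw
    exact absurd (le_of_mem_takeWhile_le (hw.mem_of_lt (by omega) hy)) (by simp)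

lemma IsRGF.sublist_of_nonCrossing {v₁ v₂ s : List ℕ} {b : ℕ} (hw : IsRGF (v₁ ++ b :: v₂))
    (hnc : NonCrossing (v₁ ++ b :: v₂)) (hb : b ∉ v₁)
    (hs : (s ++ [b]).Sublist (v₁ ++ b :: v₂)) (hsb : ∀ x ∈ s, x < b) : s.Sublist v₁ := by
  obtain ⟨t₁, t₂, hst, ht₁, ht₂⟩ := List.sublist_append_iff.mp hs
  rcases t₂.eq_nil_or_concat with rfl | ⟨t₂, z, rfl⟩
  · rw [List.append_nil] at hst
    exact absurd (ht₁.subset (hst ▸ by simp)) hb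
  rw [List.concat_eq_append, ← List.append_assoc] at hst
  obtain ⟨rfl, hz⟩ := List.append_inj' hst rfl
  obtain rfl : b = z := by simpa using hz
  rcases t₂ with _ | ⟨x, t₂⟩
  · simpa using ht₁
  -- Here a letter `x` of `s` is taken from behind the first `b`, which yields `x b x b`.
  have hxb : x < b := hsb x (by simp)
  have hx₁ : x ∈ v₁ := hw.mem_of_lt (hw.1 x (hs.subset (by simp))) hxb
  have hx₂ : [x, b].Sublist v₂ := by
    have : [x, b].Sublist (b :: v₂) := .trans (by simp) ht₂
    exact (List.sublist_cons_iff.mp this).resolve_right fun ⟨_, h, _⟩ ↦ hxb.ne (List.cons.inj h).1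
  have : [x, b, x, b].Sublist (v₁ ++ b :: v₂) :=
    (List.singleton_sublist.mpr hx₁).append (hx₂.cons_cons b)
  exact absurd (nonCrossing_iff.mp hnc x b this) hxb.not_ge

/-- A word over the positive integers whose first letter is minimal, such as any RGF. An
occurrence of `ρ` in a word then starts at its smallest letter, which is what determines the cut
belonging to an occurrence of `σ[ρ]`. -/
def LeastHead (w : List ℕ) : Prop := ∀ x ∈ w, 1 ≤ w.headI ∧ w.headI ≤ x

lemma LeastHead.one_le {w : List ℕ} (h : LeastHead w) : ∀ x ∈ w, 1 ≤ x :=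
  fun x hx ↦ (h x hx).1.trans (h x hx).2

lemma IsRGF.leastHead {w : List ℕ} (h : IsRGF w) : LeastHead w := by
  rcases eq_or_ne w [] with rfl | hne
  · exact List.forall_mem_nil _
  · obtain ⟨v, rfl⟩ := h.exists_eq_one_cons hne
    exact fun x hx ↦ ⟨le_rfl, h.1 x hx⟩

lemma WordOrdIso.exists_least_head {s ρ : List ℕ} (h : WordOrdIso s ρ) (hρ : LeastHead ρ)
    (hne : ρ ≠ []) : ∃ b t, s = b :: t ∧ ∀ x ∈ s, b ≤ x := by
  obtain ⟨hl, hlt⟩ := wordOrdIso_iff_zip.mp h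
  obtain ⟨c, ρ, rfl⟩ := List.exists_cons_of_ne_nil hne
  obtain ⟨b, s, rfl⟩ := List.exists_cons_of_length_eq_add_one hl
  refine ⟨b, s, rfl, fun x hx ↦ ?_⟩
  rw [← List.map_fst_zip hl.le] at hx
  obtain ⟨z, hz, rfl⟩ := List.mem_map.mp hx
  by_contra! hzb
  have := (hlt z hz (b, c) (by simp)).mp hzb
  exact this.not_ge (hρ z.2 (List.of_mem_zip hz).2).2

lemma exists_cut_of_patContains_rgfComp {w σ ρ : List ℕ} (hw : IsRGF w) (hnc : NonCrossing w)
    (hρ : LeastHead ρ) (hne : ρ ≠ []) (h : PatContains w (rgfComp σ ρ)) :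
    ∃ m < nLetters w, PatContains (w.takeWhile (· ≤ m)) σ ∧ PatContains (w.filter (m < ·)) ρ := by
  obtain ⟨s₁, s₂, hs, h₁, h₂, hlt⟩ := (patContains_rgfComp_iff hρ.one_le).mp h
  obtain ⟨b, t, rfl, hb⟩ := h₂.exists_least_head hρ hne
  have hbw : b ∈ w := hs.subset (by simp)
  obtain ⟨m, rfl⟩ := Nat.exists_eq_add_of_le' (hw.1 b hbw)
  have hm : m < nLetters w := le_nLetters hbw
  refine ⟨m, hm, ⟨s₁, ?_, h₁⟩, ⟨_, ?_, h₂⟩⟩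
  · obtain ⟨v, hv⟩ := hw.exists_eq_takeWhile_append hm
    have hs' : (s₁ ++ [m + 1]).Sublist w := .trans (by simp) hs
    rw [hv] at hw hnc hs'
    exact hw.sublist_of_nonCrossing hnc (mt le_of_mem_takeWhile_le m.not_succ_le_self) hs'
      fun x hx ↦ hlt x hx _ List.mem_cons_self
  · have := ((List.sublist_append_right s₁ _).trans hs).filter (m < ·)
    rwa [List.filter_eq_self.mpr (by simpa using hb)] at this

/-! ### Non-crossing RGFs as binary trees -/

lemma IsRGF.exists_eq_rgfComp {w : List ℕ} (hw : IsRGF w) (hnc : NonCrossing w) (hne : w ≠ []) :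
    ∃ u v, w = rgfComp (u ++ [1]) v ∧ ∀ x ∈ v, 1 ≤ x := by
  have one_mem : 1 ∈ w := by
    obtain ⟨v, rfl⟩ := hw.exists_eq_one_cons hne
    exact List.mem_cons_self
  obtain ⟨v, u, huv, hv⟩ := List.eq_append_cons_of_mem (List.mem_reverse.mpr one_mem)
  obtain rfl : w = u.reverse ++ 1 :: v.reverse := by simpa using congrArg List.reverse huv
  rw [← List.mem_reverse] at hv
  generalize u.reverse = u at *
  generalize v.reverse = v at *
  have large : ∀ x ∈ v, nLetters (u ++ [1]) < x := by
    intro x hx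
    by_contra! hxu
    have hx₁ : 1 < x :=
      (hw.1 x (by simp [hx])).lt_of_ne fun h ↦ hv (h ▸ hx)
    have hu : IsRGF u := hw.of_append
    simp only [nLetters_append, nLetters_cons, nLetters_nil] at hxu
    have hxu' : x ∈ u := hu.mem_of_le_nLetters hx₁.le (by omega)
    obtain ⟨l, r, rfl⟩ := List.append_of_mem hxu'
    have h₁ : [1, x].Sublist (l ++ x :: r) :=
      (List.singleton_sublist.mpr (hu.mem_of_lt le_rfl hx₁)).append
        (List.singleton_sublist.mpr List.mem_cons_self)
    have h₂ : [1, x].Sublist (1 :: v) := (List.singleton_sublist.mpr hx).cons_cons 1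
    exact (nonCrossing_iff.mp hnc 1 x (h₁.append h₂)).not_gt hx₁
  refine ⟨u, v.map (· - nLetters (u ++ [1])), ?_, ?_⟩
  · have : v.map ((· + nLetters (u ++ [1])) ∘ (· - nLetters (u ++ [1]))) = v :=
      (List.map_congr_left fun x hx ↦ Nat.sub_add_cancel (large x hx).le).trans (List.map_id' v)
    rw [rgfComp, List.map_map, this, ← List.append_cons]
  · exact List.forall_mem_map.mpr fun x hx ↦ Nat.sub_pos_of_lt (large x hx)

lemma append_cons_inj_of_notMem_right {α : Type*} {a : α} {u u' v v' : List α} (hv : a ∉ v)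
    (hv' : a ∉ v') (h : u ++ a :: v = u' ++ a :: v') : u = u' ∧ v = v' := by
  rcases List.append_eq_append_iff.mp h with ⟨_ | ⟨b, c⟩, rfl, hc⟩ | ⟨_ | ⟨b, c⟩, rfl, hc⟩ <;>
    simp_all

/-- Binary trees, used as a model of non-crossing RGFs: see `NCTree.word`. -/
abbrev NCTree := BinaryTree Unit

namespace NCTree

open BinaryTree

/-- The non-crossing RGF of a tree: `a △ v` stands for `(a1)[v]`, so that the right spine of a
tree lists the components of its word. -/
def word : NCTree → List ℕ
  | .nil => []
  | .node _ a v => rgfComp (word a ++ [1]) (word v)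

/-- The number of nodes on the right spine, i.e. the number of components of the word. -/
def numComps : NCTree → ℕ
  | .nil => 0
  | .node _ _ v => numComps v + 1

/-- Grafting of the second tree at the end of the right spine of the first one; on words this is
`rgfComp`. -/
def append : NCTree → NCTree → NCTree
  | .nil, u => u
  | .node _ a v, u => a △ append v u

@[simp] lemma word_nil : word nil = [] := rfl

@[simp] lemma word_node (a v : NCTree) : word (a △ v) = rgfComp (word a ++ [1]) (word v) := rfl

@[simp] lemma numComps_nil : numComps nil = 0 := rfl

@[simp] lemma numComps_node (a v : NCTree) : numComps (a △ v) = numComps v + 1 := rfl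

@[simp] lemma nil_append (u : NCTree) : append nil u = u := rfl

@[simp] lemma node_append (a v u : NCTree) : append (a △ v) u = a △ append v u := rfl

lemma numComps_eq_zero {t : NCTree} : numComps t = 0 ↔ t = nil := by
  induction t using BinaryTree.unitRecOn <;> simp

lemma word_append (t u : NCTree) : word (append t u) = rgfComp (word t) (word u) := by
  induction t using BinaryTree.unitRecOn with
  | base => simp
  | ind a v _ ih => simp [ih, rgfComp_assoc]

@[simp] lemma numComps_append (t u : NCTree) :
    numComps (append t u) = numComps t + numComps u := by
  induction t using BinaryTree.unitRecOn with
  | base => simp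
  | ind a v _ ih => simp only [node_append, numComps_node, ih]; omega

@[simp] lemma numNodes_append (t u : NCTree) :
    (append t u).numNodes = t.numNodes + u.numNodes := by
  induction t using BinaryTree.unitRecOn with
  | base => simp
  | ind a v _ ih => simp only [node_append, numNodes, ih]; omega

lemma append_eq_nil {t u : NCTree} : append t u = nil ↔ t = nil ∧ u = nil := by
  rw [← numComps_eq_zero, numComps_append, Nat.add_eq_zero_iff, numComps_eq_zero, numComps_eq_zero]

lemma append_inj {t t' u u' : NCTree} (h : append t u = append t' u')
    (hc : numComps t = numComps t') : t = t' ∧ u = u' := by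
  induction t using BinaryTree.unitRecOn generalizing t' with
  | base =>
    obtain rfl := numComps_eq_zero.mp hc.symm
    exact ⟨rfl, h⟩
  | ind a v _ ih =>
    induction t' using BinaryTree.unitRecOn with
    | base => simp at hc
    | ind a' v' =>
      simp only [node_append, node.injEq, true_and] at h
      obtain ⟨rfl, rfl⟩ := ih h.2 (by simpa using hc)
      exact ⟨by rw [h.1], rfl⟩

lemma exists_eq_append {t : NCTree} {r : ℕ} (hr : r ≤ numComps t) :
    ∃ t₁ t₂, t = append t₁ t₂ ∧ numComps t₁ = r := by
  induction t using BinaryTree.unitRecOn generalizing r with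
  | base => exact ⟨nil, nil, rfl, (Nat.le_zero.mp hr).symm⟩
  | ind a v _ ih =>
    rcases r with _ | r
    · exact ⟨nil, a △ v, rfl, rfl⟩
    · obtain ⟨t₁, t₂, rfl, rfl⟩ := ih (Nat.le_of_succ_le_succ hr)
      exact ⟨a △ t₁, t₂, rfl, rfl⟩

lemma length_word (t : NCTree) : (word t).length = t.numNodes := by
  induction t using BinaryTree.unitRecOn with
  | base => rfl
  | ind a v iha ihv =>
    simp only [word_node, rgfComp, List.length_append, List.length_map, List.length_singleton, iha,
      ihv, numNodes]
    omega

lemma isRGF_word (t : NCTree) : IsRGF (word t) := by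
  induction t using BinaryTree.unitRecOn with
  | base => exact isRGF_nil
  | ind a v iha ihv =>
    rw [word_node, isRGF_rgfComp_iff ihv.1, isRGF_concat_iff]
    exact ⟨⟨iha, le_rfl, Nat.le_add_left _ _⟩, ihv⟩

lemma nonCrossing_word (t : NCTree) : NonCrossing (word t) := by
  induction t using BinaryTree.unitRecOn with
  | base => exact nonCrossing_iff.mpr fun a b h ↦ by simp at h
  | ind a v iha ihv =>
    rw [word_node, nonCrossing_rgfComp_iff (isRGF_word v).1]
    exact ⟨iha.concat_one (isRGF_word a).1, ihv⟩

lemma exists_word_eq {w : List ℕ} (hw : IsRGF w) (hnc : NonCrossing w) : ∃ t, word t = w := by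
  induction hl : w.length using Nat.strong_induction_on generalizing w with
  | _ l ih =>
    rcases eq_or_ne w [] with rfl | hne
    · exact ⟨nil, rfl⟩
    obtain ⟨u, v, rfl, hv⟩ := hw.exists_eq_rgfComp hnc hne
    rw [isRGF_rgfComp_iff hv, isRGF_concat_iff] at hw
    rw [nonCrossing_rgfComp_iff hv] at hnc
    simp only [rgfComp, List.length_append, List.length_map, List.length_singleton] at hl
    obtain ⟨a, rfl⟩ := ih _ (by omega) hw.1.1 (hnc.1.mono (List.sublist_append_left _ _)) rfl
    obtain ⟨b, rfl⟩ := ih _ (by omega) hw.2 hnc.2 rfl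
    exact ⟨a △ b, rfl⟩

lemma one_notMem_map_word (t : NCTree) (l : List ℕ) :
    1 ∉ (word t).map (· + nLetters (l ++ [1])) := fun h ↦ by
  have := lt_of_mem_map_add (isRGF_word t).1 h
  simp at this

lemma word_injective : Function.Injective word := by
  intro t t' h
  induction t using BinaryTree.unitRecOn generalizing t' with
  | base =>
    induction t' using BinaryTree.unitRecOn with
    | base => rfl
    | ind a' v' => simp [rgfComp] at h
  | ind a v iha ihv =>
    induction t' using BinaryTree.unitRecOn with
    | base => simp [rgfComp] at h
    | ind a' v' =>
      simp only [word_node, rgfComp, List.append_assoc, List.singleton_append] at h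
      obtain ⟨ha, hv⟩ := append_cons_inj_of_notMem_right (one_notMem_map_word v _)
        (one_notMem_map_word v' _) h
      obtain rfl := iha ha
      rw [ihv (List.map_injective_iff.mpr add_left_strictMono.injective hv)]

lemma word_eq_nil {t : NCTree} : word t = [] ↔ t = nil :=
  word_injective.eq_iff' word_nil

lemma connected_word_iff {t : NCTree} : Connected (word t) ↔ numComps t = 1 := by
  induction t using BinaryTree.unitRecOn with
  | base => simp [Connected]
  | ind a v =>
    rw [numComps_node, Nat.add_eq_right, numComps_eq_zero]
    constructor
    · rintro ⟨-, h⟩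
      by_contra hv
      refine h ⟨word a ++ [1], word v, ?_, isRGF_word v, by simp, mt word_eq_nil.mp hv, rfl⟩
      simpa using isRGF_word (a △ nil)
    · rintro rfl
      refine ⟨by simp, ?_⟩
      rintro ⟨x, y, hx, hy, hxne, hyne, h⟩
      obtain ⟨y, c, rfl⟩ := y.eq_nil_or_concat'.resolve_left hyne
      have hc : 1 ≤ c := hy.1 c (by simp)
      have hx₁ : 0 < nLetters x := hx.nLetters_pos hxne
      have hlast : c + nLetters x = 1 := by
        simpa [rgfComp] using (congrArg List.getLast? h).symm
      omega

lemma isRGF_foldr_rgfComp {l : List (List ℕ)} (h : ∀ c ∈ l, IsRGF c) :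
    IsRGF (l.foldr rgfComp []) := by
  induction l with
  | nil => exact isRGF_nil
  | cons c l ih =>
    rw [List.forall_mem_cons] at h
    exact (isRGF_rgfComp_iff (ih h.2).1).mpr ⟨h.1, ih h.2⟩

lemma numComps_eq_length {t : NCTree} {l : List (List ℕ)} (hl : ∀ c ∈ l, IsRGF c ∧ Connected c)
    (ht : word t = l.foldr rgfComp []) : numComps t = l.length := by
  induction l generalizing t with
  | nil => rw [word_eq_nil.mp ht, numComps_nil, List.length_nil]
  | cons c l ih =>
    rw [List.forall_mem_cons] at hl
    have hrgf : IsRGF (l.foldr rgfComp []) := isRGF_foldr_rgfComp fun c hc ↦ (hl.2 c hc).1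
    have hnc := nonCrossing_word t
    rw [ht, List.foldr_cons, nonCrossing_rgfComp_iff hrgf.1] at hnc
    obtain ⟨a, rfl⟩ := exists_word_eq hl.1.1 hnc.1
    obtain ⟨v, hv⟩ := exists_word_eq hrgf hnc.2
    rw [List.foldr_cons, ← hv, ← word_append] at ht
    rw [word_injective ht, numComps_append, ih hl.2 hv, connected_word_iff.mp hl.1.2,
      List.length_cons, add_comm]

lemma hasComponents_word_iff {t : NCTree} {p : ℕ} : HasComponents (word t) p ↔ numComps t = p := by
  constructor
  · rintro ⟨l, rfl, hl, ht⟩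
    exact numComps_eq_length hl ht
  · rintro rfl
    induction t using BinaryTree.unitRecOn with
    | base => exact ⟨[], rfl, by simp, rfl⟩
    | ind a v _ ih =>
      obtain ⟨l, hlen, hl, hv⟩ := ih
      have hw : word (a △ nil) = word a ++ [1] := by simp
      refine ⟨word (a △ nil) :: l, by simp [hlen], List.forall_mem_cons.mpr ⟨⟨?_, ?_⟩, hl⟩, ?_⟩
      · exact isRGF_word _
      · exact connected_word_iff.mpr rfl
      · rw [word_node, hw, List.foldr_cons, ← hv]

/-! ### cc-equivalence in terms of embeddings -/

/-- The members of `A` with a given number of nodes and of components. -/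
def fiber (A : Set NCTree) (n p : ℕ) : Set NCTree := {t ∈ A | t.numNodes = n ∧ numComps t = p}

lemma finite_fiber (A : Set NCTree) (n p : ℕ) : (fiber A n p).Finite :=
  (treesOfNumNodesEq n).finite_toSet.subset fun _ ht ↦ mem_treesOfNumNodesEq.mpr ht.2.1

/-- There is an injection of `A` into `B` preserving the numbers of nodes and of components. -/
def Embeds (A B : Set NCTree) : Prop :=
  ∃ f : NCTree → NCTree, Set.InjOn f A ∧
    ∀ t ∈ A, f t ∈ B ∧ (f t).numNodes = t.numNodes ∧ numComps (f t) = numComps t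

lemma Embeds.refl (A : Set NCTree) : Embeds A A :=
  ⟨id, Set.injOn_id A, fun _ ht ↦ ⟨ht, rfl, rfl⟩⟩

lemma embeds_iff {A B : Set NCTree} :
    Embeds A B ↔ ∀ n p, (fiber A n p).ncard ≤ (fiber B n p).ncard := by
  constructor
  · rintro ⟨f, hinj, hf⟩ n p
    refine Set.ncard_le_ncard_of_injOn f ?_ (hinj.mono fun _ ht ↦ ht.1) (finite_fiber B n p)
    rintro t ⟨ht, rfl, rfl⟩
    exact hf t ht
  · intro h
    have hex : ∀ n p, ∃ f : NCTree → NCTree,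
        Set.MapsTo f (fiber A n p) (fiber B n p) ∧ Set.InjOn f (fiber A n p) := fun n p ↦ by
      refine Set.Finite.exists_injOn_of_encard_le (t := fiber B n p) (finite_fiber A n p) ?_
      rw [← (finite_fiber A n p).cast_ncard_eq, ← (finite_fiber B n p).cast_ncard_eq]
      exact Nat.cast_le.mpr (h n p)
    choose f hmaps hinj using hex
    have hf : ∀ t ∈ A, f t.numNodes (numComps t) t ∈ fiber B t.numNodes (numComps t) :=
      fun t ht ↦ hmaps _ _ ⟨ht, rfl, rfl⟩
    refine ⟨fun t ↦ f t.numNodes (numComps t) t, fun t ht u hu htu ↦ ?_, hf⟩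
    have hn : t.numNodes = u.numNodes :=
      (hf t ht).2.1.symm.trans ((congrArg _ htu).trans (hf u hu).2.1)
    have hp : numComps t = numComps u :=
      (hf t ht).2.2.symm.trans ((congrArg _ htu).trans (hf u hu).2.2)
    simp only [← hn, ← hp] at htu
    exact hinj _ _ ⟨ht, rfl, rfl⟩ ⟨hu, hn.symm, hp.symm⟩ htu

/-- The trees whose words contain the pattern `ρ`. -/
def containing (ρ : List ℕ) : Set NCTree := {t | PatContains (word t) ρ}

lemma ncCount_add_ncard_fiber_containing (n p : ℕ) (ρ : List ℕ) :
    ncCount n p ρ + (fiber (containing ρ) n p).ncard = (fiber Set.univ n p).ncard := by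
  have himage : {w | IsRGF w ∧ NonCrossing w ∧ w.length = n ∧ PatAvoids w ρ ∧ HasComponents w p} =
      word '' (fiber Set.univ n p \ fiber (containing ρ) n p) := by
    ext w
    constructor
    · rintro ⟨hw, hnc, hn, hρ, hp⟩
      obtain ⟨t, rfl⟩ := exists_word_eq hw hnc
      exact ⟨t, ⟨⟨trivial, length_word t ▸ hn, hasComponents_word_iff.mp hp⟩, fun h ↦ hρ h.1⟩, rfl⟩
    · rintro ⟨t, ⟨⟨-, rfl, rfl⟩, hρ⟩, rfl⟩
      exact ⟨isRGF_word t, nonCrossing_word t, length_word t, fun h ↦ hρ ⟨h, rfl, rfl⟩,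
        hasComponents_word_iff.mpr rfl⟩
  rw [ncCount, himage, Set.ncard_image_of_injective _ word_injective]
  exact Set.ncard_sdiff_add_ncard_of_subset (fun t ht ↦ ⟨trivial, ht.2⟩) (finite_fiber _ n p)

lemma ccEquiv_iff_embeds {ρ ρ' : List ℕ} : ccEquiv ρ ρ' ↔
    Embeds (containing ρ) (containing ρ') ∧ Embeds (containing ρ') (containing ρ) := by
  rw [embeds_iff, embeds_iff, ← forall_and]
  refine forall_congr' fun n ↦ ?_
  rw [← forall_and]
  refine forall_congr' fun p ↦ ?_
  have := ncCount_add_ncard_fiber_containing n p ρ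
  have := ncCount_add_ncard_fiber_containing n p ρ'
  omega

/-! ### Cuts of trees -/

/-- `IsCut s P x w` says that `P` and `x` are the parts of `w` below and above a cut: with
`m = nLetters (word P)`, the word of `w` starts with that of `P`, followed by `m + 1`, and the
letters of `w` larger than `m` form the word of `x`, up to a shift.

The skeleton `s` describes how the two parts are glued together, reading `w` from the outside:
`none` stands for a component `a1` of `w` that lies entirely below the cut, and `some r` for a
component that is cut, where the part above the cut contributes `r` components to `x`. -/
inductive IsCut : List (Option ℕ) → NCTree → NCTree → NCTree → Prop
  | start {x : NCTree} (hx : x ≠ nil) : IsCut [] nil x x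
  | skip {s : List (Option ℕ)} {a P x w : NCTree} (h : IsCut s P x w) :
      IsCut (none :: s) (a △ P) x (a △ w)
  | wrap {s : List (Option ℕ)} {P x v w : NCTree} (h : IsCut s P x w) (hP : P ≠ nil) :
      IsCut (some (numComps x) :: s) P (append x v) (w △ v)

lemma nLetters_word_pos {t : NCTree} (ht : t ≠ nil) : 0 < nLetters (word t) :=
  (isRGF_word t).nLetters_pos (mt word_eq_nil.mp ht)

lemma exists_isCut {w : NCTree} {m : ℕ} (hm : m < nLetters (word w)) :
    ∃ s P x, IsCut s P x w ∧ nLetters (word P) = m := by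
  induction w using BinaryTree.unitRecOn generalizing m with
  | base => exact absurd hm (Nat.not_lt_zero m)
  | ind a v iha ihv =>
    rcases Nat.eq_zero_or_pos m with rfl | hpos
    · exact ⟨[], nil, a △ v, .start (by simp), rfl⟩
    rcases lt_or_ge m (nLetters (word a)) with hma | hma
    · obtain ⟨s, P, x, h, rfl⟩ := iha hma
      exact ⟨_, P, append x v, h.wrap (by rintro rfl; simp at hpos), rfl⟩
    · have ha : nLetters (word a ++ [1]) ≤ m := by
        simp only [nLetters_append, nLetters_cons, nLetters_nil]
        omega
      rw [word_node, nLetters_rgfComp] at hm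
      obtain ⟨s, P, x, h, hP⟩ := ihv (Nat.sub_lt_left_of_lt_add ha hm)
      refine ⟨_, a △ P, x, h.skip, ?_⟩
      rw [word_node, nLetters_rgfComp, hP]
      omega

namespace IsCut

variable {s s' : List (Option ℕ)} {P P' x x' w w' : NCTree}

lemma ne_nil (h : IsCut s P x w) : x ≠ nil := by
  induction h with
  | start hx => exact hx
  | skip _ ih => exact ih
  | wrap _ _ ih => exact fun h ↦ ih (append_eq_nil.mp h).1

lemma numNodes_eq (h : IsCut s P x w) :
    w.numNodes = P.numNodes + x.numNodes + s.countP Option.isSome := by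
  induction h with
  | start => simp
  | skip _ ih =>
    simp only [numNodes, ih, List.countP_cons, Option.isSome_none, Bool.false_eq_true, if_false]
    omega
  | wrap _ _ ih =>
    simp only [numNodes, numNodes_append, ih, List.countP_cons, Option.isSome_some, if_true]
    omega

lemma nLetters_word (h : IsCut s P x w) :
    nLetters (word w) = nLetters (word P) + nLetters (word x) := by
  induction h with
  | start => simp
  | skip _ ih => simp [ih, add_assoc]
  | wrap _ hP ih =>
    have := nLetters_word_pos hP
    simp only [word_append, word_node, nLetters_rgfComp, nLetters_append, nLetters_cons,
      nLetters_nil, ih]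
    omega

lemma filter_word (h : IsCut s P x w) :
    (word w).filter (nLetters (word P) < ·) = (word x).map (· + nLetters (word P)) := by
  induction h with
  | @start x _ =>
    exact (List.filter_eq_self.mpr fun b hb ↦ decide_eq_true ((isRGF_word x).1 b hb)).trans
      (List.map_id' _).symm
  | @skip s a P x w _ ih =>
    rw [word_node, nLetters_rgfComp, word_node, filter_rgfComp, ih, List.map_map]
    exact List.map_congr_left fun b _ ↦ by simp only [Function.comp_apply]; omega
  | @wrap s P x v w h hP ih =>
    have hm := nLetters_word_pos hP
    have hw : nLetters (word w ++ [1]) = nLetters (word P) + nLetters (word x) := by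
      rw [nLetters_append, h.nLetters_word]
      exact max_eq_left (by rw [nLetters_cons, nLetters_nil]; omega)
    have h1 : [1].filter (nLetters (word P) < ·) = [] := by
      simpa using Nat.succ_le_of_lt hm
    rw [word_node, filter_rgfComp_of_le (isRGF_word v).1 (by omega), List.filter_append, ih, h1,
      List.append_nil, word_append, rgfComp, List.map_append, List.map_map, hw]
    congr 1
    exact List.map_congr_left fun b _ ↦ by simp only [Function.comp_apply]; omega

lemma takeWhile_word (h : IsCut s P x w) :
    (word w).takeWhile (· ≤ nLetters (word P)) = word P := by
  induction h with
  | @start x _ =>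
    refine List.takeWhile_eq_nil_iff.mpr fun hl ↦ ?_
    simpa using Nat.ne_of_gt ((isRGF_word x).1 _ (List.getElem_mem hl))
  | @skip s a P x w _ ih =>
    rw [word_node, nLetters_rgfComp, word_node, takeWhile_rgfComp, ih]
  | @wrap s P x v w h _ ih =>
    have hw : nLetters (word P) < nLetters (word w) := by
      have := nLetters_word_pos h.ne_nil
      rw [h.nLetters_word]
      omega
    rw [word_node, rgfComp, List.append_assoc, takeWhile_append_of_lt_nLetters hw, ih]

lemma takeWhile_word_of_le (h : IsCut s P x w) {k : ℕ} (hk : k ≤ nLetters (word P)) :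
    (word P).takeWhile (· ≤ k) = (word w).takeWhile (· ≤ k) := by
  rw [← h.takeWhile_word, takeWhile_takeWhile_of_le hk]

lemma patContains_filter_word_iff (h : IsCut s P x w) {k : ℕ} {τ : List ℕ} :
    PatContains ((word w).filter (nLetters (word P) + k < ·)) τ ↔
      PatContains ((word x).filter (k < ·)) τ := by
  have : (word w).filter (nLetters (word P) + k < ·) =
      ((word x).filter (k < ·)).map (· + nLetters (word P)) := by
    calc (word w).filter (nLetters (word P) + k < ·)
      _ = ((word w).filter (nLetters (word P) < ·)).filter (nLetters (word P) + k < ·) := by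
        rw [List.filter_filter]
        refine List.filter_congr fun b _ ↦ ?_
        rw [← Bool.decide_and, decide_eq_decide]
        omega
      _ = ((word x).filter (k < ·)).map (· + nLetters (word P)) := by
        rw [h.filter_word, List.filter_map]
        refine congrArg _ (List.filter_congr fun b _ ↦ ?_)
        rw [Function.comp_apply, decide_eq_decide]
        omega
  rw [this, patContains_map add_left_strictMono]

lemma unique_of_nLetters_eq (h : IsCut s P x w) (h' : IsCut s' P' x' w)
    (hP : nLetters (word P) = nLetters (word P')) : P = P' ∧ x = x' := by
  refine ⟨word_injective ?_, word_injective ?_⟩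
  · rw [← h.takeWhile_word, ← h'.takeWhile_word, hP]
  · refine List.map_injective_iff.mpr (add_left_strictMono (a := nLetters (word P))).injective ?_
    rw [← h.filter_word, hP, h'.filter_word]

lemma eq_of_eq (h : IsCut s P x w) (h' : IsCut s P x w') : w = w' := by
  induction h generalizing w' with
  | start => cases h'; rfl
  | skip _ ih =>
    cases h' with
    | skip h' => rw [ih h']
  | @wrap s P x v w h hP ih =>
    generalize hy : append x v = y at h'
    generalize hr : some (numComps x) = r at h'
    cases h' with
    | skip => cases hr
    | wrap h' =>
      obtain ⟨rfl, rfl⟩ := append_inj hy (Option.some_injective _ hr)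
      rw [ih h']

lemma eq_nil_of_nil (h : IsCut s nil x w) : s = [] := by
  cases h with
  | start => rfl
  | wrap _ hP => contradiction

lemma skeleton_unique (h : IsCut s P x w) (h' : IsCut s' P x w) : s = s' := by
  induction h generalizing s' with
  | start => exact h'.eq_nil_of_nil.symm
  | @skip s a P x w h ih =>
    generalize hQ : a △ P = Q at h'
    generalize hw : a △ w = W at h'
    cases h' with
    | start => cases hQ
    | skip h' =>
      cases hQ
      cases hw
      rw [ih h']
    | wrap h' =>
      cases hw
      have := h'.numNodes_eq
      simp only [← hQ, numNodes] at this
      omega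
  | @wrap s P x v w h hP ih =>
    generalize hy : append x v = y at h'
    generalize hw : w △ v = W at h'
    cases h' with
    | start => contradiction
    | skip h' =>
      cases hw
      have := h.numNodes_eq
      simp only [numNodes] at this
      omega
    | @wrap _ _ x' _ _ h' =>
      cases hw
      have hc : numComps x = numComps x' := by simpa using congrArg numComps hy
      obtain ⟨rfl, -⟩ := append_inj hy hc
      rw [ih h']

lemma exists_replace (h : IsCut s P x w) (hP : numComps P' = numComps P)
    (hx : numComps x' = numComps x) : ∃ w', IsCut s P' x' w' ∧ numComps w' = numComps w := by
  induction h generalizing P' x' with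
  | start hne =>
    obtain rfl := numComps_eq_zero.mp hP
    exact ⟨x', .start (by rwa [ne_eq, ← numComps_eq_zero, hx, numComps_eq_zero]), hx⟩
  | skip _ ih =>
    induction P' using BinaryTree.unitRecOn with
    | base => simp at hP
    | ind a' P' =>
      obtain ⟨w', hw', hc⟩ := ih (Nat.succ_injective hP) hx
      exact ⟨a' △ w', hw'.skip, congrArg (· + 1) hc⟩
  | @wrap s P x v w _ hne ih =>
    rw [numComps_append] at hx
    obtain ⟨y, v', rfl, hy⟩ := exists_eq_append (t := x') (r := numComps x) (by omega)
    obtain ⟨w', hw', -⟩ := ih hP hy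
    rw [numComps_append, hy, add_right_inj] at hx
    refine ⟨w' △ v', hy ▸ hw'.wrap ?_, congrArg (· + 1) hx⟩
    rwa [ne_eq, ← numComps_eq_zero, hP, numComps_eq_zero]

end IsCut

/-! ### Replacing the parts of a cut -/

/-- The trees of `T` are those that can be cut into a part from `A` and a part from `B`, and the
position of such a cut is unique: `nLetters_le` holds in both directions. -/
structure CutFactorization (T A B : Set NCTree) : Prop where
  mem_iff : ∀ {w}, w ∈ T ↔ ∃ s, ∃ P ∈ A, ∃ x ∈ B, IsCut s P x w
  nLetters_le : ∀ {s s' P P' x x' w}, IsCut s P x w → IsCut s' P' x' w →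
    P ∈ A → x ∈ B → P' ∈ A → x' ∈ B → nLetters (word P) ≤ nLetters (word P')

lemma Embeds.of_cutFactorization {T T' A A' B B' : Set NCTree} (hT : CutFactorization T A B)
    (hT' : CutFactorization T' A' B') (hA : Embeds A A') (hB : Embeds B B') : Embeds T T' := by
  obtain ⟨f, finj, hf⟩ := hA
  obtain ⟨g, ginj, hg⟩ := hB
  have hex : ∀ w ∈ T, ∃ s, ∃ P ∈ A, ∃ x ∈ B, ∃ w',
      IsCut s P x w ∧ IsCut s (f P) (g x) w' ∧ numComps w' = numComps w := fun w hw ↦ by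
    obtain ⟨s, P, hP, x, hx, h⟩ := hT.mem_iff.mp hw
    obtain ⟨w', h', hc⟩ := h.exists_replace (hf P hP).2.2 (hg x hx).2.2
    exact ⟨s, P, hP, x, hx, w', h, h', hc⟩
  choose! s P hP x hx F h h' hc using hex
  refine ⟨F, fun w hw u hu hwu ↦ ?_, fun w hw ↦ ⟨?_, ?_, hc w hw⟩⟩
  · have hw' := h' w hw
    have hu' := h' u hu
    rw [← hwu] at hu'
    have fPw := (hf _ (hP w hw)).1
    have fPu := (hf _ (hP u hu)).1
    have gxw := (hg _ (hx w hw)).1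
    have gxu := (hg _ (hx u hu)).1
    obtain ⟨hPP, hxx⟩ := hw'.unique_of_nLetters_eq hu' <| le_antisymm
      (hT'.nLetters_le hw' hu' fPw gxw fPu gxu) (hT'.nLetters_le hu' hw' fPu gxu fPw gxw)
    rw [← hPP, ← hxx] at hu'
    have hcut := h u hu
    rw [← finj (hP w hw) (hP u hu) hPP, ← ginj (hx w hw) (hx u hu) hxx,
      ← hw'.skeleton_unique hu'] at hcut
    exact (h w hw).eq_of_eq hcut
  · exact hT'.mem_iff.mpr ⟨_, _, (hf _ (hP w hw)).1, _, (hg _ (hx w hw)).1, h' w hw⟩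
  · rw [(h' w hw).numNodes_eq, (h w hw).numNodes_eq, (hf _ (hP w hw)).2.1, (hg _ (hx w hw)).2.1]

/-- The trees containing `σ` for which no proper initial segment cut off by bounding the letters
contains `σ`. -/
def minimalContaining (σ : List ℕ) : Set NCTree :=
  {P ∈ containing σ | ∀ k < nLetters (word P), ¬ PatContains ((word P).takeWhile (· ≤ k)) σ}

/-- The trees containing `τ` for which removing the smallest letters destroys all occurrences
of `τ`. -/
def maximalContaining (τ : List ℕ) : Set NCTree :=
  {x ∈ containing τ | ∀ k > 0, ¬ PatContains ((word x).filter (k < ·)) τ}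

lemma IsCut.mem_containing_rgfComp {s : List (Option ℕ)} {P x w : NCTree} {σ ρ : List ℕ}
    (h : IsCut s P x w) (hρ : ∀ b ∈ ρ, 1 ≤ b) (hP : P ∈ containing σ) (hx : x ∈ containing ρ) :
    w ∈ containing (rgfComp σ ρ) := by
  refine patContains_rgfComp_of_cut hρ (nLetters (word P)) ?_ ?_
  · rwa [h.takeWhile_word]
  · rwa [h.filter_word, patContains_map add_left_strictMono]

lemma cutFactorization_minimalContaining {σ ρ : List ℕ} (hρ : LeastHead ρ) (hne : ρ ≠ []) :
    CutFactorization (containing (rgfComp σ ρ)) (minimalContaining σ) (containing ρ) where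
  mem_iff := by
    classical
    intro w
    constructor
    · intro hw
      obtain ⟨m, hm, hσw, hρw⟩ :=
        exists_cut_of_patContains_rgfComp (isRGF_word w) (nonCrossing_word w) hρ hne hw
      have hex : ∃ m, PatContains ((word w).takeWhile (· ≤ m)) σ := ⟨m, hσw⟩
      have hle : Nat.find hex ≤ m := Nat.find_min' hex hσw
      obtain ⟨s, P, x, h, hP⟩ := exists_isCut (hle.trans_lt hm)
      refine ⟨s, P, ⟨?_, fun k hk ↦ ?_⟩, x, ?_, h⟩
      · have := Nat.find_spec hex
        rwa [← hP, h.takeWhile_word] at this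
      · rw [h.takeWhile_word_of_le hk.le]
        exact Nat.find_min hex (hP ▸ hk)
      · have := hρw.mono (List.monotone_filter_right (q := (nLetters (word P) < ·)) _ fun b hb ↦ by
          simp only [decide_eq_true_eq] at hb ⊢
          omega)
        rwa [h.filter_word, patContains_map add_left_strictMono] at this
    · rintro ⟨s, P, hP, x, hx, h⟩
      exact h.mem_containing_rgfComp hρ.one_le hP.1 hx
  nLetters_le {s s' P P' x x' w} h h' hP _ hP' _ := by
    by_contra! hlt
    refine hP.2 _ hlt ?_
    rw [h.takeWhile_word_of_le hlt.le, h'.takeWhile_word]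
    exact hP'.1

lemma lt_nLetters_of_patContains_filter {w τ : List ℕ} (hne : τ ≠ []) {m : ℕ}
    (h : PatContains (w.filter (m < ·)) τ) : m < nLetters w := by
  obtain ⟨b, hb⟩ := List.exists_mem_of_ne_nil _ (h.ne_nil hne)
  obtain ⟨hbw, hmb⟩ := List.mem_filter.mp hb
  exact (of_decide_eq_true hmb).trans_le (le_nLetters hbw)

lemma cutFactorization_maximalContaining {σ τ : List ℕ} (hτ : LeastHead τ) (hne : τ ≠ []) :
    CutFactorization (containing (rgfComp σ τ)) (containing σ) (maximalContaining τ) where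
  mem_iff := by
    intro w
    constructor
    · intro hw
      obtain ⟨m, -, hσw, hτw⟩ :=
        exists_cut_of_patContains_rgfComp (isRGF_word w) (nonCrossing_word w) hτ hne hw
      have hbdd : BddAbove {m | PatContains ((word w).filter (m < ·)) τ} :=
        ⟨nLetters (word w), fun m hm ↦ (lt_nLetters_of_patContains_filter hne hm).le⟩
      obtain ⟨M, hM, hmax⟩ := hbdd.exists_isGreatest_of_nonempty ⟨m, hτw⟩
      obtain ⟨s, P, x, h, rfl⟩ := exists_isCut (lt_nLetters_of_patContains_filter hne hM)
      refine ⟨s, P, ?_, x, ⟨?_, fun k hk hkx ↦ ?_⟩, h⟩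
      · rw [← takeWhile_takeWhile_of_le (hmax hτw), h.takeWhile_word] at hσw
        exact hσw.mono (List.takeWhile_sublist _)
      · rwa [Set.mem_ofPred_eq, h.filter_word, patContains_map add_left_strictMono] at hM
      · have := hmax (h.patContains_filter_word_iff.mpr hkx)
        omega
    · rintro ⟨s, P, hP, x, hx, h⟩
      exact h.mem_containing_rgfComp hτ.one_le hP hx.1
  nLetters_le {s s' P P' x x' w} h h' _ hx _ hx' := by
    by_contra! hlt
    refine hx'.2 _ (Nat.sub_pos_of_lt hlt) (h'.patContains_filter_word_iff.mp ?_)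
    rw [Nat.add_sub_cancel' hlt.le, h.filter_word]
    exact (patContains_map add_left_strictMono).mpr hx.1

lemma Embeds.eq_nil {ρ : List ℕ} (h : Embeds (containing []) (containing ρ)) : ρ = [] := by
  obtain ⟨f, -, hf⟩ := h
  obtain ⟨hmem, hnodes, -⟩ := hf nil (patContains_nil _)
  by_contra hne
  refine hmem.ne_nil hne (List.eq_nil_of_length_eq_zero ?_)
  rw [length_word, hnodes]
  rfl

lemma Embeds.rgfComp_left {ρ ρ' : List ℕ} (σ : List ℕ) (hρ : LeastHead ρ) (hρ' : LeastHead ρ')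
    (h : Embeds (containing ρ) (containing ρ')) (h' : Embeds (containing ρ') (containing ρ)) :
    Embeds (containing (rgfComp σ ρ)) (containing (rgfComp σ ρ')) := by
  rcases eq_or_ne ρ [] with rfl | hne
  · rw [h.eq_nil]
    exact .refl _
  have hne' : ρ' ≠ [] := by
    rintro rfl
    exact hne h'.eq_nil
  exact .of_cutFactorization (cutFactorization_minimalContaining hρ hne)
    (cutFactorization_minimalContaining hρ' hne') (.refl _) h

lemma Embeds.rgfComp_right {σ σ' τ : List ℕ} (hτ : LeastHead τ)
    (h : Embeds (containing σ) (containing σ')) :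
    Embeds (containing (rgfComp σ τ)) (containing (rgfComp σ' τ)) := by
  rcases eq_or_ne τ [] with rfl | hne
  · simpa using h
  exact .of_cutFactorization (cutFactorization_maximalContaining hτ hne)
    (cutFactorization_maximalContaining hτ hne) h (.refl _)

end NCTree

lemma ccEquiv.rgfComp_left {ρ ρ' : List ℕ} (h : ccEquiv ρ ρ') (σ : List ℕ) (hρ : LeastHead ρ)
    (hρ' : LeastHead ρ') : ccEquiv (rgfComp σ ρ) (rgfComp σ ρ') := by
  rw [NCTree.ccEquiv_iff_embeds] at h ⊢
  exact ⟨h.1.rgfComp_left σ hρ hρ' h.2, h.2.rgfComp_left σ hρ' hρ h.1⟩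

lemma ccEquiv.rgfComp_right {σ σ' τ : List ℕ} (h : ccEquiv σ σ') (hτ : LeastHead τ) :
    ccEquiv (rgfComp σ τ) (rgfComp σ' τ) := by
  rw [NCTree.ccEquiv_iff_embeds] at h ⊢
  exact ⟨h.1.rgfComp_right hτ, h.2.rgfComp_right hτ⟩

theorem stmt6_general (σ : List ℕ) {τ ρ ρ' : List ℕ} (hτ : LeastHead τ) (hρ : LeastHead ρ)
    (hρ' : LeastHead ρ') (h : ccEquiv ρ ρ') :
    ccEquiv (rgfComp (rgfComp σ ρ) τ) (rgfComp (rgfComp σ ρ') τ) :=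
  (h.rgfComp_left σ hρ hρ').rgfComp_right hτ

/-- Theorem 3.2: substituting a cc-equivalent pattern preserves cc-equivalence:
`σ[ρ][τ] ≃cc σ[ρ′][τ]`. -/
theorem stmt6 (σ τ ρ ρ' : List ℕ)
    (hσ : IsRGF σ) (hσnc : NonCrossing σ) (hτ : IsRGF τ) (hτnc : NonCrossing τ)
    (hρ : IsRGF ρ) (hρnc : NonCrossing ρ) (hρ' : IsRGF ρ') (hρ'nc : NonCrossing ρ')
    (h : ccEquiv ρ ρ') :
    ccEquiv (rgfComp (rgfComp σ ρ) τ) (rgfComp (rgfComp σ ρ') τ) :=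
  stmt6_general σ hτ.leastHead hρ.leastHead hρ'.leastHead h
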